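/- Let n ≥ 1 be an integer, t > 0 a real number, y a real number, and s a complex number with Re(s) > 0. Then ∫_0^∞ e^{−su}·B̄_n(tu+y) du = n!·(t^n/s^{n+1})·( Σ_{a=0}^{n} (B_a({y})/a!)·(s/t)^a − (s/t)·e^{{y}·s/t}/(e^{s/t}−1) ), where {y} = y − ⌊y⌋ denotes the fractional part of y. -/

import Mathlib

open Finset

/-- The `n`-th Bernoulli polynomial evaluated at a real number. -/
noncomputable def BPoly (n : ℕ) (x : ℝ) : ℝ :=
  Polynomial.eval x ((Polynomial.bernoulli n).map (algebraMap ℚ ℝ))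

open scoped Classical in
/-- The `n`-th Bernoulli function `B̄ₙ`. -/
noncomputable def BFun (n : ℕ) (x : ℝ) : ℝ :=
  if n = 1 then (if ∃ m : ℤ, x = (m : ℝ) then 0 else x - ⌊x⌋ - 1/2)
  else BPoly n (Int.fract x)


open MeasureTheory

theorem shift_Ioi (g : ℝ → ℂ) (a d : ℝ) :
    ∫ x in Set.Ioi a, g (x + d) = ∫ x in Set.Ioi (a + d), g x := by
  have h := (measurePreserving_add_right (volume : Measure ℝ) d).setIntegral_preimage_emb
    (measurableEmbedding_addRight d) g (Set.Ioi (a + d))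
  rw [← h]
  congr 2
  simp

theorem BPoly_hasDerivAt (n : ℕ) (x : ℝ) :
    HasDerivAt (BPoly (n + 1)) ((n + 1) * BPoly n x) x := by
  have h := ((Polynomial.bernoulli (n + 1)).map (algebraMap ℚ ℝ)).hasDerivAt x
  rw [Polynomial.derivative_map, Polynomial.derivative_bernoulli_add_one] at h
  have e : BPoly (n + 1) = fun x => Polynomial.eval x
      ((Polynomial.bernoulli (n + 1)).map (algebraMap ℚ ℝ)) := rfl
  rw [e]
  refine h.congr_deriv ?_
  simp [BPoly]

theorem BPoly_continuous (n : ℕ) : Continuous (BPoly n) := by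
  unfold BPoly
  exact Polynomial.continuous _

theorem BPoly_zero (x : ℝ) : BPoly 0 x = 1 := by simp [BPoly]

theorem BPoly_one_eq (x : ℝ) : BPoly 1 x = x - 1 / 2 := by
  simp [BPoly]

theorem BPoly_jump (n : ℕ) : BPoly n 1 = BPoly n 0 + if n = 1 then 1 else 0 := by
  have h1 : BPoly n 1 = ((Polynomial.bernoulli n).eval 1 : ℚ) := by
    unfold BPoly
    have := Polynomial.eval_map_algebraMap (B := ℝ) (Polynomial.bernoulli n) 1
    rw [this]
    have := Polynomial.aeval_algebraMap_apply ℝ (1 : ℚ) (Polynomial.bernoulli n)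
    simpa using this
  have h0 : BPoly n 0 = ((Polynomial.bernoulli n).eval 0 : ℚ) := by
    unfold BPoly
    have := Polynomial.eval_map_algebraMap (B := ℝ) (Polynomial.bernoulli n) 0
    rw [this]
    have := Polynomial.aeval_algebraMap_apply ℝ (0 : ℚ) (Polynomial.bernoulli n)
    simpa using this
  have h := Polynomial.bernoulli_eval_one_add n 0
  rw [add_zero] at h
  rw [h1, h0, h]
  rcases n with _ | _ | n <;> simp

/-- Partial sums of the generating function. -/
noncomputable def TSum (n : ℕ) (w : ℂ) (x : ℝ) : ℂ :=
  ∑ a ∈ Finset.range (n + 1), ((BPoly a x : ℝ) : ℂ) / (a.factorial : ℂ) * w ^ a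

theorem TSum_jump (n : ℕ) (hn : 1 ≤ n) (w : ℂ) : TSum n w 1 = TSum n w 0 + w := by
  unfold TSum
  have : ∀ a ∈ Finset.range (n + 1), ((BPoly a 1 : ℝ) : ℂ) / (a.factorial : ℂ) * w ^ a =
      ((BPoly a 0 : ℝ) : ℂ) / (a.factorial : ℂ) * w ^ a + if a = 1 then w else 0 := by
    intro a _
    rw [BPoly_jump]
    split_ifs with h
    · subst h; simp; ring
    · simp
  rw [Finset.sum_congr rfl this, Finset.sum_add_distrib]
  simp
  omega

theorem TSum_hasDerivAt (n : ℕ) (w : ℂ) (x : ℝ) :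
    HasDerivAt (TSum n w)
      (w * (TSum n w x - ((BPoly n x : ℝ) : ℂ) / (n.factorial : ℂ) * w ^ n)) x := by
  induction n with
  | zero =>
    have : TSum 0 w = fun _ => (1 : ℂ) := by
      funext x; simp [TSum, BPoly_zero]
    rw [this]
    simpa [BPoly_zero] using hasDerivAt_const x (1 : ℂ)
  | succ n ih =>
    have e : TSum (n + 1) w = fun x => TSum n w x +
        ((BPoly (n + 1) x : ℝ) : ℂ) / ((n + 1).factorial : ℂ) * w ^ (n + 1) := by
      funext x; simp only [TSum]; rw [Finset.sum_range_succ]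
    rw [e]
    have h := ((BPoly_hasDerivAt n x).ofReal_comp.div_const ((n + 1).factorial : ℂ)).mul_const
      (w ^ (n + 1))
    refine (ih.add h).congr_deriv ?_
    have h1 : (n.factorial : ℂ) ≠ 0 := by exact_mod_cast n.factorial_ne_zero
    have h2 : (n + 1 : ℂ) ≠ 0 := by exact_mod_cast n.succ_ne_zero
    rw [Nat.factorial_succ]
    push_cast
    field_simp
    ring

theorem prim_hasDerivAt (n : ℕ) (w : ℂ) (x : ℝ) :
    HasDerivAt (fun x : ℝ => -(Complex.exp (-w * x) * TSum n w x))
      (w ^ (n + 1) / (n.factorial : ℂ) * (Complex.exp (-w * x) * ((BPoly n x : ℝ) : ℂ))) x := by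
  have h1 : HasDerivAt (fun x : ℝ => Complex.exp (-w * x)) (Complex.exp (-w * x) * (-w * 1)) x :=
    ((hasDerivAt_id x).ofReal_comp.const_mul (-w)).cexp
  refine (h1.mul (TSum_hasDerivAt n w x)).neg.congr_deriv ?_
  have h1 : (n.factorial : ℂ) ≠ 0 := by exact_mod_cast n.factorial_ne_zero
  field_simp
  ring

theorem int_piece (n : ℕ) (w : ℂ) (a b : ℝ) (ha : 0 ≤ a) (hab : a ≤ b) (hb : b ≤ 1) :
    w ^ (n + 1) / (n.factorial : ℂ) *
      ∫ x in a..b, Complex.exp (-w * x) * ((BPoly n (Int.fract x) : ℝ) : ℂ) =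
    Complex.exp (-w * a) * TSum n w a - Complex.exp (-w * b) * TSum n w b := by
  have : ∫ x in a..b, Complex.exp (-w * x) * ((BPoly n (Int.fract x) : ℝ) : ℂ) =
      ∫ x in a..b, Complex.exp (-w * x) * ((BPoly n x : ℝ) : ℂ) := by
    refine intervalIntegral.integral_congr_Ioo_of_le hab fun x hx => ?_
    have : Int.fract x = x := Int.fract_eq_self.2 ⟨by linarith [hx.1], by linarith [hx.2]⟩
    simp only [this]
  rw [this, ← intervalIntegral.integral_const_mul,
    intervalIntegral.integral_eq_sub_of_hasDerivAt (fun x _ => prim_hasDerivAt n w x)]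
  · ring
  · apply Continuous.intervalIntegrable
    have := BPoly_continuous n
    fun_prop

theorem integrable_piece (n : ℕ) (w : ℂ) (hw : 0 < w.re) (c : ℝ) :
    IntegrableOn (fun x : ℝ => Complex.exp (-w * x) * ((BPoly n (Int.fract x) : ℝ) : ℂ))
      (Set.Ioi c) := by
  obtain ⟨C, hC⟩ := isCompact_Icc.exists_bound_of_continuousOn
    (BPoly_continuous n).continuousOn (s := Set.Icc (0 : ℝ) 1)
  refine Integrable.mul_bdd (c := C)
    (integrableOn_exp_mul_complex_Ioi (by simpa using hw) c) ?_ ?_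
  · have := (BPoly_continuous n).measurable
    exact (Complex.measurable_ofReal.comp (this.comp measurable_fract)).aestronglyMeasurable
  · filter_upwards with x
    simpa using hC _ ⟨Int.fract_nonneg x, (Int.fract_lt_one x).le⟩

theorem J_eq (n : ℕ) (hn : 1 ≤ n) (w : ℂ) (hw : 0 < w.re) (f : ℝ) (hf : 0 ≤ f) (hf1 : f < 1) :
    w ^ (n + 1) / (n.factorial : ℂ) * (Complex.exp (f * w) *
      ∫ x in Set.Ioi f, Complex.exp (-w * x) * ((BPoly n (Int.fract x) : ℝ) : ℂ)) =
    TSum n w f - w * Complex.exp (f * w) / (Complex.exp w - 1) := by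
  have I := integrable_piece n w hw
  have p1 := int_piece n w f 1 hf hf1.le le_rfl
  have p0 := int_piece n w 0 1 le_rfl zero_le_one le_rfl
  have j1 := intervalIntegral.integral_interval_add_Ioi (I f) (I 1)
  have j0 := intervalIntegral.integral_interval_add_Ioi (I 0) (I 1)
  have sh : ∫ x in Set.Ioi (1 : ℝ), Complex.exp (-w * x) * ((BPoly n (Int.fract x) : ℝ) : ℂ) =
      Complex.exp (-w) *
        ∫ x in Set.Ioi (0 : ℝ), Complex.exp (-w * x) * ((BPoly n (Int.fract x) : ℝ) : ℂ) := by
    have := shift_Ioi (fun x : ℝ => Complex.exp (-w * x) * ((BPoly n (Int.fract x) : ℝ) : ℂ)) 0 1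
    rw [zero_add] at this
    rw [← this, ← integral_const_mul]
    congr 1 with x
    rw [Int.fract_add_one, ← mul_assoc, ← Complex.exp_add]
    congr 2
    push_cast; ring
  rw [TSum_jump n hn] at p0 p1
  have hE : Complex.exp w - 1 ≠ 0 := by
    intro h
    have h2 : ‖Complex.exp w‖ = 1 := by rw [sub_eq_zero.1 h]; simp
    rw [Complex.norm_exp] at h2
    have := Real.one_lt_exp_iff.2 hw
    linarith
  have hE0 := Complex.exp_ne_zero w
  have hF0 := Complex.exp_ne_zero (f * w)
  have ef : Complex.exp (-w * f) = (Complex.exp (f * w))⁻¹ := by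
    rw [← Complex.exp_neg]; congr 1; ring
  have e1 : Complex.exp (-w) = (Complex.exp w)⁻¹ := Complex.exp_neg w
  simp only [Complex.ofReal_one, Complex.ofReal_zero, mul_one, mul_zero, Complex.exp_zero,
    one_mul] at p0 p1
  rw [ef, e1] at p1
  rw [e1] at p0 sh
  rw [← j1]
  rw [sh] at j0 ⊢
  generalize (∫ x in Set.Ioi (0 : ℝ), Complex.exp (-w * x) * ((BPoly n (Int.fract x) : ℝ) : ℂ)) = J
    at *
  generalize (∫ x in (0:ℝ)..1, Complex.exp (-w * x) * ((BPoly n (Int.fract x) : ℝ) : ℂ)) = A at *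
  generalize (∫ x in f..1, Complex.exp (-w * x) * ((BPoly n (Int.fract x) : ℝ) : ℂ)) = B at *
  generalize Complex.exp w = E at *
  generalize Complex.exp (f * w) = F at *
  generalize w ^ (n + 1) / (n.factorial : ℂ) = K at *
  have hJ : K * J = TSum n w 0 - w / (E - 1) := by
    have hA : A = J * (1 - E⁻¹) := by linear_combination j0
    rw [hA] at p0
    field_simp at p0 ⊢
    linear_combination p0
  have : K * (F * (B + E⁻¹ * J)) = F * (K * B) + F * E⁻¹ * (K * J) := by ring
  rw [this, p1, hJ]
  field_simp
  ring

theorem BFun_eq (n : ℕ) (x : ℝ) (hx : ¬ ∃ m : ℤ, x = (m : ℝ)) :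
    BFun n x = BPoly n (Int.fract x) := by
  unfold BFun
  split_ifs with h
  · subst h; rw [BPoly_one_eq]; rfl
  · rfl

/-- The Laplace transform of the Bernoulli function `B̄ₙ(tu+y)` (identity (16)). -/
theorem laplace_transform_BFun (n : ℕ) (hn : 1 ≤ n) (t : ℝ) (ht : 0 < t) (y : ℝ)
    (s : ℂ) (hs : 0 < s.re) :
    ∫ u in Set.Ioi (0 : ℝ), Complex.exp (-s * u) * ((BFun n (t * u + y)) : ℂ) =
      (n.factorial : ℂ) * ((t : ℂ) ^ n / s ^ (n + 1)) *
        ((∑ a ∈ Finset.range (n + 1),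
            ((BPoly a (Int.fract y)) : ℂ) / (a.factorial : ℂ) * (s / t) ^ a)
          - (s / t) * Complex.exp ((Int.fract y : ℝ) * (s / t)) / (Complex.exp (s / t) - 1)) := by
  have ht0 : (t : ℂ) ≠ 0 := by exact_mod_cast ht.ne'
  have hs0 : s ≠ 0 := by rintro rfl; simp at hs
  have hw : 0 < (s / t).re := by
    rw [Complex.div_ofReal_re]; positivity
  have hJ := J_eq n hn (s / t) hw (Int.fract y) (Int.fract_nonneg y) (Int.fract_lt_one y)
  have hae : ∫ u in Set.Ioi (0 : ℝ), Complex.exp (-s * u) * ((BFun n (t * u + y)) : ℂ) =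
      ∫ u in Set.Ioi (0 : ℝ), (fun v : ℝ => Complex.exp (-(s / t) * v) *
        ((BPoly n (Int.fract (v + Int.fract y)) : ℝ) : ℂ)) (t * u) := by
    apply integral_congr_ae
    apply ae_restrict_of_ae
    have hc : (Set.range fun m : ℤ => ((m : ℝ) - y) / t).Countable := Set.countable_range _
    filter_upwards [hc.ae_notMem volume] with u hu
    rw [BFun_eq]
    · have h1 : Int.fract (t * u + y) = Int.fract (t * u + Int.fract y) := by
        rw [Int.fract_eq_fract]
        exact ⟨⌊y⌋, by rw [Int.fract]; ring⟩
      simp only [h1]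
      congr 2
      push_cast
      field_simp
    · rintro ⟨m, hm⟩
      exact hu ⟨m, by simp only []; rw [← hm]; field_simp; ring⟩
  have hsh : ∫ v in Set.Ioi (0 : ℝ), Complex.exp (-(s / t) * v) *
        ((BPoly n (Int.fract (v + Int.fract y)) : ℝ) : ℂ) =
      Complex.exp ((Int.fract y : ℝ) * (s / t)) * ∫ x in Set.Ioi (Int.fract y),
        Complex.exp (-(s / t) * x) * ((BPoly n (Int.fract x) : ℝ) : ℂ) := by
    have := shift_Ioi (fun x : ℝ => Complex.exp (-(s / t) * x) *
      ((BPoly n (Int.fract x) : ℝ) : ℂ)) 0 (Int.fract y)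
    rw [zero_add] at this
    rw [← this, ← integral_const_mul]
    congr 1 with x
    rw [← mul_assoc, ← Complex.exp_add]
    congr 2
    push_cast; ring
  rw [hae, integral_comp_mul_left_Ioi (fun v : ℝ => Complex.exp (-(s / t) * v) *
        ((BPoly n (Int.fract (v + Int.fract y)) : ℝ) : ℂ)) 0 ht, mul_zero, hsh]
  unfold TSum at hJ
  rw [← hJ]
  have h1 : (n.factorial : ℂ) ≠ 0 := by exact_mod_cast n.factorial_ne_zero
  rw [Complex.real_smul, Complex.ofReal_inv]
  generalize Complex.exp ((Int.fract y : ℝ) * (s / t)) * (∫ x in Set.Ioi (Int.fract y),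
        Complex.exp (-(s / t) * x) * ((BPoly n (Int.fract x) : ℝ) : ℂ)) = Q
  rw [div_pow]
  field_simp
  ring
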